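/- For every x ∈ ℝ, the derivative of g_pro satisfies −1 ≤ g_pro'(x) ≤ 0. -/

import Mathlib

/-!
Write `N = stdN` and `P = PhiPro`. Since `N' = -t N` and `P' = N`, the derivative of `N / P` is
`-(x N P + N²) / P²`, so the two bounds amount to `0 ≤ x P + N` and `N² + x N P ≤ P²`.

Both are positivity of moments of the normal law truncated to `(-∞, x]`, whose unnormalised moments
are `∫ N = P`, `∫ t N = -N(x)` and `∫ t² N = P - x N(x)`. The first inequality is
`0 ≤ ∫ (x - t) N(t) dt`; the second says that the variance of the truncated law is nonnegative,
in the form `0 ≤ ∫ (P(x) t + N(x))² N(t) dt = P (P² - x N P - N²)`.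
-/

/-- The standard normal probability density function. -/
noncomputable def stdN (x : ℝ) : ℝ := (Real.sqrt (2 * Real.pi))⁻¹ * Real.exp (-x ^ 2 / 2)

/-- The standard normal cumulative distribution function (inverse probit link). -/
noncomputable def PhiPro (x : ℝ) : ℝ := ∫ t in Set.Iic x, stdN t

/-- The Mills-type ratio `g_pro(x) = 𝒩(x) / Φ_pro(x)`. -/
noncomputable def gPro (x : ℝ) : ℝ := stdN x / PhiPro x

open MeasureTheory Set Filter Topology

lemma stdN_pos (x : ℝ) : 0 < stdN x := by
  unfold stdN
  positivity

lemma hasDerivAt_stdN (x : ℝ) : HasDerivAt stdN (-(x * stdN x)) x := by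
  have h : HasDerivAt (fun y : ℝ => -y ^ 2 / 2) (-x) x := by
    have h := ((hasDerivAt_pow 2 x).neg).div_const 2
    refine h.congr_deriv ?_
    norm_num
    ring
  have h' := (h.exp).const_mul (Real.sqrt (2 * Real.pi))⁻¹
  refine h'.congr_deriv ?_
  unfold stdN
  ring

lemma continuous_stdN : Continuous stdN :=
  continuous_iff_continuousAt.2 fun x => (hasDerivAt_stdN x).continuousAt

lemma integrable_pow_mul_stdN (n : ℕ) : Integrable fun t : ℝ => t ^ n * stdN t := by
  have hn : (-1 : ℝ) < (n : ℝ) := by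
    have : (0 : ℝ) ≤ n := n.cast_nonneg
    linarith
  have h := (integrable_rpow_mul_exp_neg_mul_sq (b := 1 / 2) (by norm_num) hn).const_mul
    (Real.sqrt (2 * Real.pi))⁻¹
  refine h.congr (Eventually.of_forall fun t => ?_)
  simp only [Real.rpow_natCast, stdN]
  rw [show -(1 / 2) * t ^ 2 = -t ^ 2 / 2 by ring]
  ring

lemma integrable_stdN : Integrable stdN := by
  simpa using integrable_pow_mul_stdN 0

lemma integrable_id_mul_stdN : Integrable fun t : ℝ => t * stdN t := by
  simpa using integrable_pow_mul_stdN 1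

lemma PhiPro_pos (x : ℝ) : 0 < PhiPro x := by
  unfold PhiPro
  rw [setIntegral_pos_iff_support_of_nonneg_ae
    (Eventually.of_forall fun t => (stdN_pos t).le) integrable_stdN.integrableOn]
  have : Function.support stdN = univ := by
    ext t
    simp [(stdN_pos t).ne']
  simp [this]

lemma hasDerivAt_PhiPro (x : ℝ) : HasDerivAt PhiPro (stdN x) x := by
  have h : PhiPro = fun y => PhiPro 0 + ∫ t in (0 : ℝ)..y, stdN t := by
    funext y
    have := intervalIntegral.integral_Iic_sub_Iic (μ := volume) (f := stdN) (a := 0) (b := y)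
      integrable_stdN.integrableOn integrable_stdN.integrableOn
    rw [← this]
    simp [PhiPro]
  rw [h]
  exact (intervalIntegral.integral_hasDerivAt_right integrable_stdN.intervalIntegrable
    continuous_stdN.aestronglyMeasurable.stronglyMeasurableAtFilter
    continuous_stdN.continuousAt).const_add _

/-- Fundamental theorem of calculus on `(-∞, x]`; integrability of the primitive itself forces its
limit at `-∞` to vanish. -/
lemma integral_Iic_of_integrable {F f : ℝ → ℝ} (hF : ∀ t, HasDerivAt F (f t) t)
    (hFi : Integrable F) (hf : Integrable f) (x : ℝ) : ∫ t in Iic x, f t = F x := by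
  have h0 : Tendsto F atBot (𝓝 0) :=
    tendsto_zero_of_hasDerivAt_of_integrableOn_Iic (a := x) (fun t _ => hF t)
      hf.integrableOn hFi.integrableOn
  rw [integral_Iic_of_hasDerivAt_of_tendsto' (fun t _ => hF t) hf.integrableOn h0, sub_zero]

lemma integral_id_mul_stdN (x : ℝ) : ∫ t in Iic x, t * stdN t = -stdN x := by
  refine integral_Iic_of_integrable (F := fun t => -stdN t) (fun t => ?_)
    integrable_stdN.neg integrable_id_mul_stdN x
  simpa using (hasDerivAt_stdN t).fun_neg

lemma integral_sq_mul_stdN (x : ℝ) :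
    ∫ t in Iic x, t ^ 2 * stdN t = PhiPro x - x * stdN x := by
  have h : ∫ t in Iic x, (t ^ 2 * stdN t - stdN t) = -(x * stdN x) := by
    refine integral_Iic_of_integrable (F := fun t => -(t * stdN t)) (fun t => ?_)
      integrable_id_mul_stdN.neg ((integrable_pow_mul_stdN 2).sub integrable_stdN) x
    refine (((hasDerivAt_id t).fun_mul (hasDerivAt_stdN t)).fun_neg).congr_deriv ?_
    simp only [id, Pi.sub_apply]
    ring
  rw [integral_sub (integrable_pow_mul_stdN 2).integrableOn integrable_stdN.integrableOn] at h
  unfold PhiPro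
  linarith

lemma integral_quadratic_mul_stdN (a b c x : ℝ) :
    ∫ t in Iic x, (a * t ^ 2 + b * t + c) * stdN t =
      a * (PhiPro x - x * stdN x) - b * stdN x + c * PhiPro x := by
  have h2 : IntegrableOn (fun t : ℝ => a * (t ^ 2 * stdN t)) (Iic x) :=
    ((integrable_pow_mul_stdN 2).const_mul a).integrableOn
  have h1 : IntegrableOn (fun t : ℝ => b * (t * stdN t)) (Iic x) :=
    (integrable_id_mul_stdN.const_mul b).integrableOn
  have h0 : IntegrableOn (fun t : ℝ => c * stdN t) (Iic x) :=
    (integrable_stdN.const_mul c).integrableOn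
  have e : ∀ t : ℝ, (a * t ^ 2 + b * t + c) * stdN t =
      a * (t ^ 2 * stdN t) + b * (t * stdN t) + c * stdN t := fun t => by ring
  simp_rw [e]
  have h21 : IntegrableOn (fun t : ℝ => a * (t ^ 2 * stdN t) + b * (t * stdN t)) (Iic x) :=
    h2.add h1
  rw [integral_add h21 h0, integral_add h2 h1, integral_const_mul, integral_const_mul,
    integral_const_mul, integral_sq_mul_stdN, integral_id_mul_stdN]
  unfold PhiPro
  ring

lemma mul_PhiPro_add_stdN_nonneg (x : ℝ) : 0 ≤ x * PhiPro x + stdN x := by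
  have h : 0 ≤ ∫ t in Iic x, (0 * t ^ 2 + (-1) * t + x) * stdN t := by
    refine setIntegral_nonneg measurableSet_Iic fun t ht => mul_nonneg ?_ (stdN_pos t).le
    have : t ≤ x := ht
    linarith
  rw [integral_quadratic_mul_stdN] at h
  linarith

/-- Nonnegativity of the variance of the normal law truncated to `(-∞, x]`. -/
lemma stdN_sq_add_le (x : ℝ) : stdN x ^ 2 + x * stdN x * PhiPro x ≤ PhiPro x ^ 2 := by
  have h : 0 ≤ ∫ t in Iic x,
      (PhiPro x ^ 2 * t ^ 2 + (2 * PhiPro x * stdN x) * t + stdN x ^ 2) * stdN t := by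
    refine setIntegral_nonneg measurableSet_Iic fun t _ => mul_nonneg ?_ (stdN_pos t).le
    nlinarith [sq_nonneg (PhiPro x * t + stdN x)]
  rw [integral_quadratic_mul_stdN] at h
  have h' : 0 ≤ PhiPro x * (PhiPro x ^ 2 - x * stdN x * PhiPro x - stdN x ^ 2) := by
    linarith
  have := nonneg_of_mul_nonneg_right h' (PhiPro_pos x)
  linarith

/-- For every real `x`, the derivative of `g_pro` satisfies `-1 ≤ g_pro'(x) ≤ 0`. -/
theorem stmt6 (x : ℝ) :
    -1 ≤ deriv gPro x ∧ deriv gPro x ≤ 0 := by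
  have hP := PhiPro_pos x
  have hd : deriv gPro x =
      (-(x * stdN x) * PhiPro x - stdN x * stdN x) / PhiPro x ^ 2 :=
    ((hasDerivAt_stdN x).fun_div (hasDerivAt_PhiPro x) hP.ne').deriv
  rw [hd]
  constructor
  · rw [le_div_iff₀ (by positivity)]
    linarith [stdN_sq_add_le x]
  · refine div_nonpos_of_nonpos_of_nonneg ?_ (by positivity)
    linarith [mul_nonneg (stdN_pos x).le (mul_PhiPro_add_stdN_nonneg x)]
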